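/- Let T be a bounded self-adjoint operator on a complex Hilbert space H and e ∈ H a unit vector. For real c outside the spectrum of T set r(c) = ⟨(T − c)^{-1} e, e⟩, φ(c) = arctan r(c), and κ_c = cos φ(c) · (T − c)^{-1} e. Then the map c ↦ κ_c from ℝ \ σ(T) to H is differentiable, and for any two distinct reals c, c′ outside the spectrum of T its derivative κ′_c satisfies ⟨κ′_c, κ_{c′}⟩ = φ′(c) · cos(φ(c) − φ(c′))/(c − c′) − sin(φ(c) − φ(c′))/(c − c′)², where φ′(c) = ‖(T − c)^{-1} e‖²/(1 + r(c)²). -/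

import Mathlib

open scoped InnerProductSpace

/-!
The resolvent identity and the self-adjointness of `(T - y)⁻¹` give
`(x - y) ⟪(T - x)⁻¹ e, (T - y)⁻¹ e⟫ = r x - r y`. Since `r = tan φ`, the cosines normalizing `κ`
turn this into `⟪κ x, κ y⟫ = sin (φ x - φ y) / (x - y)`, and the claimed formula is the derivative
of this kernel in `x` by the quotient rule.
-/

theorem isUnit_sub_smul_one_of_notMem_spectrum {R A : Type*} [CommRing R] [Ring A] [Algebra R A]
    {a : A} {z : R} (hz : z ∉ spectrum R a) : IsUnit (a - z • 1) := by
  rw [IsUnit.sub_iff, ← Algebra.algebraMap_eq_smul_one]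
  exact spectrum.notMem_iff.mp hz

theorem hasDerivAt_inverse_sub_smul_one {𝕜 A : Type*} [NontriviallyNormedField 𝕜] [NormedRing A]
    [HasSummableGeomSeries A] [NormedAlgebra 𝕜 A] {a : A} {z : 𝕜} (hz : z ∉ spectrum 𝕜 a) :
    HasDerivAt (fun w : 𝕜 => Ring.inverse (a - w • 1)) (Ring.inverse (a - z • 1) ^ 2) z := by
  obtain ⟨u, hu⟩ := isUnit_sub_smul_one_of_notMem_spectrum hz
  have h_shift : HasDerivAt (fun w : 𝕜 => a - w • (1 : A)) (-1) z := by
    simpa using ((hasDerivAt_id z).smul_const (1 : A)).const_sub a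
  have h_inverse : HasFDerivAt Ring.inverse _ (a - z • 1) := hu ▸ hasFDerivAt_ringInverse (𝕜 := 𝕜) u
  refine (h_inverse.comp_hasDerivAt z h_shift).congr_deriv ?_
  simp [← hu, pow_two]

theorem eventually_ofReal_notMem_spectrum {𝕜 A : Type*} [RCLike 𝕜] [NormedRing A]
    [NormedAlgebra 𝕜 A] [CompleteSpace A] {a : A} {c : ℝ} (hc : (c : 𝕜) ∉ spectrum 𝕜 a) :
    ∀ᶠ x : ℝ in nhds c, (x : 𝕜) ∉ spectrum 𝕜 a :=
  RCLike.continuous_ofReal.continuousAt.eventually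
    ((spectrum.isClosed a).isOpen_compl.eventually_mem hc)

theorem sin_arctan_sub_arctan (a b : ℝ) :
    Real.sin (Real.arctan a - Real.arctan b) =
      Real.cos (Real.arctan a) * Real.cos (Real.arctan b) * (a - b) := by
  have sin_arctan_eq (x : ℝ) : Real.sin (Real.arctan x) = x * Real.cos (Real.arctan x) := by
    rw [← Real.tan_mul_cos (Real.cos_arctan_pos x).ne', Real.tan_arctan]
  rw [Real.sin_sub, sin_arctan_eq, sin_arctan_eq]
  ring

theorem hasDerivAt_sin_sub_div_sub {f : ℝ → ℝ} {f' x y : ℝ} (hf : HasDerivAt f f' x) (θ : ℝ)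
    (hxy : x ≠ y) :
    HasDerivAt (fun t => Real.sin (f t - θ) / (t - y))
      (f' * (Real.cos (f x - θ) / (x - y)) - Real.sin (f x - θ) / (x - y) ^ 2) x := by
  have hne : x - y ≠ 0 := sub_ne_zero.mpr hxy
  refine ((hf.sub_const θ).sin.div ((hasDerivAt_id' x).sub_const y) hne).congr_deriv ?_
  field_simp

section ResolventVector

variable {𝕜 H : Type*} [RCLike 𝕜] [NormedAddCommGroup H] [InnerProductSpace 𝕜 H]

/-- The vector `(T - c)⁻¹ e`, with value `0` when `T - c` is not invertible. -/
noncomputable def resolventVector (T : H →L[𝕜] H) (e : H) (c : ℝ) : H :=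
  Ring.inverse (T - (c : 𝕜) • 1) e

/-- The diagonal resolvent matrix element `r(c) = ⟨(T - c)⁻¹ e, e⟩`. It is encoded as a real part,
which loses nothing for self-adjoint `T` by `ofReal_resolventElement`. -/
noncomputable def resolventElement (T : H →L[𝕜] H) (e : H) (c : ℝ) : ℝ :=
  RCLike.re ⟪resolventVector T e c, e⟫_𝕜

/-- The phase `φ(c) = arctan r(c)`. -/
noncomputable def resolventPhase (T : H →L[𝕜] H) (e : H) (c : ℝ) : ℝ :=
  Real.arctan (resolventElement T e c)

/-- The vector `κ_c = cos φ(c) · (T - c)⁻¹ e`, whose Gram kernel is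
`sin (φ(x) - φ(y)) / (x - y)`. -/
noncomputable def kernelVector (T : H →L[𝕜] H) (e : H) (c : ℝ) : H :=
  (Real.cos (resolventPhase T e c) : 𝕜) • resolventVector T e c

variable {T : H →L[𝕜] H}

theorem resolventVector_sub_resolventVector (e : H) {x y : ℝ}
    (hx : (x : 𝕜) ∉ spectrum 𝕜 T) (hy : (y : 𝕜) ∉ spectrum 𝕜 T) :
    resolventVector T e x - resolventVector T e y =
      ((x - y : ℝ) : 𝕜) • resolventVector T (resolventVector T e x) y := by
  have h_inverse := Ring.inverse_sub_inverse (iff_of_true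
    (isUnit_sub_smul_one_of_notMem_spectrum hy) (isUnit_sub_smul_one_of_notMem_spectrum hx))
  have h_apply := congrArg (fun S : H →L[𝕜] H => -S e) h_inverse
  simpa [resolventVector, ← sub_smul, ← neg_smul] using h_apply

variable [CompleteSpace H]

theorem isSelfAdjoint_inverse_sub_ofReal_smul_one (hT : IsSelfAdjoint T) (c : ℝ) :
    IsSelfAdjoint (Ring.inverse (T - (c : 𝕜) • 1)) :=
  (hT.sub (.smul (RCLike.conj_ofReal c) (.one _))).ringInverse

theorem inner_resolventVector_left (hT : IsSelfAdjoint T) (e v : H) (c : ℝ) :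
    ⟪resolventVector T e c, v⟫_𝕜 = ⟪e, resolventVector T v c⟫_𝕜 :=
  (isSelfAdjoint_inverse_sub_ofReal_smul_one hT c).isSymmetric e v

theorem ofReal_resolventElement (hT : IsSelfAdjoint T) (e : H) (c : ℝ) :
    (resolventElement T e c : 𝕜) = ⟪resolventVector T e c, e⟫_𝕜 :=
  RCLike.conj_eq_iff_re.mp <| by rw [inner_conj_symm, inner_resolventVector_left hT]

theorem inner_resolventVector_resolventVector (hT : IsSelfAdjoint T) (e : H) {x y : ℝ}
    (hx : (x : 𝕜) ∉ spectrum 𝕜 T) (hy : (y : 𝕜) ∉ spectrum 𝕜 T) (hxy : x ≠ y) :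
    ⟪resolventVector T e x, resolventVector T e y⟫_𝕜 =
      (((resolventElement T e x - resolventElement T e y) / (x - y) : ℝ) : 𝕜) := by
  have hne : ((x - y : ℝ) : 𝕜) ≠ 0 := RCLike.ofReal_ne_zero.mpr (sub_ne_zero.mpr hxy)
  rw [RCLike.ofReal_div, eq_div_iff hne, RCLike.ofReal_sub (resolventElement T e x),
    ofReal_resolventElement hT, ofReal_resolventElement hT, ← inner_sub_left,
    resolventVector_sub_resolventVector e hx hy, inner_smul_left, RCLike.conj_ofReal,
    inner_resolventVector_left hT (resolventVector T e x) e y, mul_comm]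

theorem inner_kernelVector_kernelVector (hT : IsSelfAdjoint T) (e : H) {x y : ℝ}
    (hx : (x : 𝕜) ∉ spectrum 𝕜 T) (hy : (y : 𝕜) ∉ spectrum 𝕜 T) (hxy : x ≠ y) :
    ⟪kernelVector T e x, kernelVector T e y⟫_𝕜 =
      ((Real.sin (resolventPhase T e x - resolventPhase T e y) / (x - y) : ℝ) : 𝕜) := by
  rw [kernelVector, kernelVector, inner_smul_left, inner_smul_right, RCLike.conj_ofReal,
    inner_resolventVector_resolventVector hT e hx hy hxy, resolventPhase, resolventPhase,
    sin_arctan_sub_arctan]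
  push_cast
  ring

variable [NormedSpace ℝ H]

theorem hasDerivAt_resolventVector (e : H) {c : ℝ} (hc : (c : 𝕜) ∉ spectrum 𝕜 T) :
    HasDerivAt (resolventVector T e) (resolventVector T (resolventVector T e c) c) c := by
  have h_operator : HasDerivAt (fun z : 𝕜 => Ring.inverse (T - z • 1) e)
      ((Ring.inverse (T - (c : 𝕜) • 1) ^ 2) e) (c : 𝕜) := by
    simpa using (hasDerivAt_inverse_sub_smul_one hc).clm_apply (hasDerivAt_const (c : 𝕜) e)
  have h_ofReal : HasDerivAt (fun x : ℝ => (x : 𝕜)) 1 c := by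
    simpa using (RCLike.ofRealCLM (K := 𝕜)).hasDerivAt (x := c)
  refine (h_operator.scomp c h_ofReal).congr_deriv ?_
  simp [resolventVector, pow_two]

theorem hasDerivAt_resolventElement (hT : IsSelfAdjoint T) (e : H) {c : ℝ}
    (hc : (c : 𝕜) ∉ spectrum 𝕜 T) :
    HasDerivAt (resolventElement T e) (‖resolventVector T e c‖ ^ 2) c := by
  have h_inner := (hasDerivAt_resolventVector e hc).inner 𝕜 (hasDerivAt_const c e)
  refine (RCLike.reCLM.hasFDerivAt.comp_hasDerivAt c h_inner).congr_deriv ?_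
  rw [inner_zero_right, zero_add, inner_resolventVector_left hT, RCLike.reCLM_apply,
    inner_self_eq_norm_sq]

theorem hasDerivAt_resolventPhase (hT : IsSelfAdjoint T) (e : H) {c : ℝ}
    (hc : (c : 𝕜) ∉ spectrum 𝕜 T) :
    HasDerivAt (resolventPhase T e)
      (‖resolventVector T e c‖ ^ 2 / (1 + resolventElement T e c ^ 2)) c :=
  (hasDerivAt_resolventElement hT e hc).arctan.congr_deriv (one_div_mul_eq_div _ _)

theorem differentiableAt_kernelVector (hT : IsSelfAdjoint T) (e : H) {c : ℝ}
    (hc : (c : 𝕜) ∉ spectrum 𝕜 T) : DifferentiableAt ℝ (kernelVector T e) c := by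
  have h_cos := (hasDerivAt_resolventPhase hT e hc).cos.differentiableAt
  have h_ofReal := (RCLike.ofRealCLM (K := 𝕜)).differentiableAt.comp c h_cos
  exact h_ofReal.smul (hasDerivAt_resolventVector e hc).differentiableAt

theorem inner_deriv_kernelVector (hT : IsSelfAdjoint T) (e : H) {x y : ℝ}
    (hx : (x : 𝕜) ∉ spectrum 𝕜 T) (hy : (y : 𝕜) ∉ spectrum 𝕜 T) (hxy : x ≠ y) :
    ⟪deriv (kernelVector T e) x, kernelVector T e y⟫_𝕜 =
      ((‖resolventVector T e x‖ ^ 2 / (1 + resolventElement T e x ^ 2) *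
          (Real.cos (resolventPhase T e x - resolventPhase T e y) / (x - y)) -
        Real.sin (resolventPhase T e x - resolventPhase T e y) / (x - y) ^ 2 : ℝ) : 𝕜) := by
  have h_inner : HasDerivAt (fun t => ⟪kernelVector T e t, kernelVector T e y⟫_𝕜)
      ⟪deriv (kernelVector T e) x, kernelVector T e y⟫_𝕜 x := by
    simpa using (differentiableAt_kernelVector hT e hx).hasDerivAt.inner 𝕜
      (hasDerivAt_const x (kernelVector T e y))
  have h_quotient := (RCLike.ofRealCLM (K := 𝕜)).hasFDerivAt.comp_hasDerivAt x
    (hasDerivAt_sin_sub_div_sub (hasDerivAt_resolventPhase hT e hx) (resolventPhase T e y) hxy)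
  have h_kernel : (fun t => ⟪kernelVector T e t, kernelVector T e y⟫_𝕜) =ᶠ[nhds x] fun t =>
      ((Real.sin (resolventPhase T e t - resolventPhase T e y) / (t - y) : ℝ) : 𝕜) := by
    filter_upwards [eventually_ofReal_notMem_spectrum hx, eventually_ne_nhds hxy] with t ht hty
    exact inner_kernelVector_kernelVector hT e ht hy hty
  exact h_inner.unique (h_quotient.congr_of_eventuallyEq h_kernel)

theorem statement19_general (T : H →L[𝕜] H) (hT : IsSelfAdjoint T) (e : H)
    (r φ : ℝ → ℝ) (κ : ℝ → H)
    (hr : ∀ c : ℝ, (r c : 𝕜) = ⟪(Ring.inverse (T - (c : 𝕜) • 1)) e, e⟫_𝕜)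
    (hφ : ∀ c : ℝ, φ c = Real.arctan (r c))
    (hκ : ∀ c : ℝ, κ c = (Real.cos (φ c) : 𝕜) • (Ring.inverse (T - (c : 𝕜) • 1)) e) :
    (∀ c : ℝ, (c : 𝕜) ∉ spectrum 𝕜 T → DifferentiableAt ℝ κ c) ∧
      ∀ c c' : ℝ, (c : 𝕜) ∉ spectrum 𝕜 T → (c' : 𝕜) ∉ spectrum 𝕜 T → c ≠ c' →
        ⟪deriv κ c, κ c'⟫_𝕜 =
          (((‖(Ring.inverse (T - (c : 𝕜) • 1)) e‖ ^ 2 / (1 + r c ^ 2)) *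
              (Real.cos (φ c - φ c') / (c - c')) -
            Real.sin (φ c - φ c') / (c - c') ^ 2 : ℝ) : 𝕜) := by
  obtain rfl : r = resolventElement T e := funext fun c =>
    RCLike.ofReal_injective <| (hr c).trans (ofReal_resolventElement hT e c).symm
  obtain rfl : φ = resolventPhase T e := funext hφ
  obtain rfl : κ = kernelVector T e := funext hκ
  exact ⟨fun _ => differentiableAt_kernelVector hT e,
    fun _ _ => inner_deriv_kernelVector hT e⟩

end ResolventVector

/-- Let `T` be a bounded self-adjoint operator on a complex Hilbert
space and `e` a unit vector. With `r(c) = ⟨(T−c)⁻¹e, e⟩` (real), `φ(c) = arctan r(c)`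
and `κ_c = cos φ(c) · (T−c)⁻¹ e`, the map `c ↦ κ_c` is differentiable on `ℝ \ σ(T)`,
and for distinct `c, c′` outside the spectrum its derivative satisfies
`⟨κ′_c, κ_{c′}⟩ = φ′(c)·cos(φ(c)−φ(c′))/(c−c′) − sin(φ(c)−φ(c′))/(c−c′)²`,
where `φ′(c) = ‖(T−c)⁻¹e‖²/(1+r(c)²)`. -/
theorem statement19 {H : Type*} [NormedAddCommGroup H] [InnerProductSpace ℂ H]
    [CompleteSpace H]
    (T : H →L[ℂ] H) (hT : IsSelfAdjoint T) (e : H) (he : ‖e‖ = 1)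
    (r φ : ℝ → ℝ) (κ : ℝ → H)
    (hr : ∀ c : ℝ, (r c : ℂ) = ⟪(Ring.inverse (T - (c : ℂ) • 1)) e, e⟫_ℂ)
    (hφ : ∀ c : ℝ, φ c = Real.arctan (r c))
    (hκ : ∀ c : ℝ, κ c = ((Real.cos (φ c) : ℂ)) • (Ring.inverse (T - (c : ℂ) • 1)) e) :
    (∀ c : ℝ, (c : ℂ) ∉ spectrum ℂ T → DifferentiableAt ℝ κ c) ∧
      ∀ c c' : ℝ, (c : ℂ) ∉ spectrum ℂ T → (c' : ℂ) ∉ spectrum ℂ T → c ≠ c' →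
        ⟪deriv κ c, κ c'⟫_ℂ =
          (((‖(Ring.inverse (T - (c : ℂ) • 1)) e‖ ^ 2 / (1 + r c ^ 2)) *
              (Real.cos (φ c - φ c') / (c - c')) -
            Real.sin (φ c - φ c') / (c - c') ^ 2 : ℝ) : ℂ) :=
  statement19_general T hT e r φ κ hr hφ hκ
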